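/- Let λ > 0 be real, m ≥ 1 an integer, and Φ_m(t) = Σ_{l=0}^{m} ((l+λ)/λ) C_l^λ(t). Then the space variance of Φ_m, defined as var_S(Φ_m) = (∫_{−1}^{1} Φ_m(t)² (1−t²)^{λ−1/2} dt / ∫_{−1}^{1} t·Φ_m(t)² (1−t²)^{λ−1/2} dt)² − 1, satisfies var_S(Φ_m) = ((2m+2λ+1)/(2m))² − 1; equivalently, ∫_{−1}^{1} Φ_m(t)² (1−t²)^{λ−1/2} dt = ((2m+2λ+1)/(2m)) · ∫_{−1}^{1} t·Φ_m(t)² (1−t²)^{λ−1/2} dt. -/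

import Mathlib

open Real Finset

/-- The Gegenbauer polynomials `C_l^λ`, defined by `C_0^λ(t) = 1`, `C_1^λ(t) = 2λt` and the
recurrence `(l+1) C_{l+1}^λ(t) = 2(l+λ) t C_l^λ(t) − (l+2λ−1) C_{l−1}^λ(t)` for `l ≥ 1`. -/
noncomputable def gegenbauer (lam : ℝ) : ℕ → ℝ → ℝ
  | 0 => fun _ => 1
  | 1 => fun t => 2 * lam * t
  | (l + 2) => fun t =>
      (2 * ((l : ℝ) + 1 + lam) * t * gegenbauer lam (l + 1) t
        - ((l : ℝ) + 2 * lam) * gegenbauer lam l t) / ((l : ℝ) + 2)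

/-- `Φ_m = Σ_{l=0}^m ((l+λ)/λ) C_l^λ`, the (unnormalized) weighted scaling function. -/
noncomputable def PhiScaling (lam : ℝ) (m : ℕ) : ℝ → ℝ :=
  fun t => ∑ l ∈ Finset.range (m + 1), (((l : ℝ) + lam) / lam) * gegenbauer lam l t

/-!
Write `w(t) = (1 - t²)^(λ - 1/2)` and `Φ = Φ_m`. Integrating `((1 - t²) w)' = -(2λ + 1) t w`
against `Φ²` gives `(2λ + 1) ∫ t Φ² w = 2 ∫ (1 + t) Φ' · (1 - t) Φ w`. By the Christoffel–Darboux
formula `2λ (1 - t) Φ = (m + 2λ) C_m^λ - (m + 1) C_{m+1}^λ`, so `(1 - t) Φ` is orthogonal to all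
polynomials of degree less than `m`. Among these is `(1 + t) Φ' - m Φ`, hence the right-hand side
is `2m ∫ (1 - t) Φ² w`, which is the assertion.

The orthogonality of `C_l^λ` to `t^k` for `k < l` is obtained by induction on `k`: the differential
equation exhibits `C_l^λ w` as a multiple of the derivative of `(1 - t²) (C_l^λ)' w`, which is the
case `k = 0`, and the recurrence expresses `t C_l^λ` through `C_{l-1}^λ` and `C_{l+1}^λ`.
-/

open Polynomial

section Algebra

variable {K : Type*} [Field K]

/-- The Gegenbauer polynomial `C_l^λ` as an element of `K[X]`, with the recurrence solved for the
term of highest index; over `ℝ` its evaluation is `gegenbauer`. -/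
noncomputable def gegenbauerPoly (lam : K) : ℕ → K[X]
  | 0 => 1
  | 1 => C (2 * lam) * X
  | l + 2 => C ((l : K) + 2)⁻¹ * (C (2 * ((l : K) + 1 + lam)) * (X * gegenbauerPoly lam (l + 1))
      - C ((l : K) + 2 * lam) * gegenbauerPoly lam l)

/-- The weighted scaling function `Φ_m = Σ_{l=0}^m ((l+λ)/λ) C_l^λ` as an element of `K[X]`; over
`ℝ` its evaluation is `PhiScaling`. As in any field `x / 0 = 0`, so it vanishes for `λ = 0`. -/
noncomputable def scalingPoly (lam : K) (m : ℕ) : K[X] :=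
  ∑ l ∈ range (m + 1), C (((l : K) + lam) / lam) * gegenbauerPoly lam l

/-- The linear functionals `L` on `K[X]` satisfying the Pearson equation
`L ((1 - X²) p') = (2λ + 1) L (X p)` of the Gegenbauer weight `(1 - t²)^(λ - 1/2)`: this is what
integration by parts gives for `L p = ∫ p(t) (1 - t²)^(λ - 1/2) dt` over `[-1, 1]`. -/
def IsGegenbauerFunctional (lam : K) (L : K[X] →ₗ[K] K) : Prop :=
  ∀ p : K[X], L ((1 - X ^ 2) * derivative p) = (2 * lam + 1) * L (X * p)

section Degree

lemma natDegree_gegenbauerPoly_le (lam : K) : ∀ l, (gegenbauerPoly lam l).natDegree ≤ l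
  | 0 => by simp [gegenbauerPoly]
  | 1 => (natDegree_C_mul_le _ _).trans natDegree_X_le
  | l + 2 => by
    have h₀ := natDegree_gegenbauerPoly_le lam l
    have h₁ := natDegree_gegenbauerPoly_le lam (l + 1)
    rw [gegenbauerPoly]
    grw [natDegree_C_mul_le, natDegree_sub_le, max_le_iff]
    constructor
    · grw [natDegree_C_mul_le, natDegree_mul_le, natDegree_X_le, h₁]
      omega
    · grw [natDegree_C_mul_le, h₀]
      omega

lemma natDegree_scalingPoly_le (lam : K) (m : ℕ) : (scalingPoly lam m).natDegree ≤ m := by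
  refine natDegree_sum_le_of_forall_le _ _ fun l hl => ?_
  grw [natDegree_C_mul_le, natDegree_gegenbauerPoly_le]
  exact Nat.le_of_lt_succ (mem_range.1 hl)

lemma degree_one_add_X_mul_derivative_sub_lt {R : Type*} [CommRing R] {p : R[X]} {m : ℕ}
    (hp : p.natDegree ≤ m) : ((1 + X) * derivative p - C (m : R) * p).degree < (m : WithBot ℕ) := by
  rw [degree_lt_iff_coeff_zero]
  intro k hk
  have hcoeff : ((1 + X) * derivative p - C (m : R) * p).coeff k =
      p.coeff (k + 1) * (k + 1) + (k - m) * p.coeff k := by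
    simp only [add_mul, one_mul, coeff_sub, coeff_add, coeff_C_mul, coeff_derivative]
    cases k with
    | zero => simp [sub_eq_add_neg]
    | succ k =>
      rw [coeff_X_mul, coeff_derivative]
      push_cast
      ring
  have hsucc : p.coeff (k + 1) = 0 := coeff_eq_zero_of_natDegree_lt (by omega)
  rw [hcoeff, hsucc, zero_mul, zero_add]
  obtain rfl | hlt := hk.eq_or_lt
  · rw [sub_self, zero_mul]
  · rw [coeff_eq_zero_of_natDegree_lt (hp.trans_lt hlt), mul_zero]

end Degree

section Identities

variable [CharZero K] (lam : K)

lemma gegenbauerPoly_recurrence (l : ℕ) :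
    C ((l : K) + 2) * gegenbauerPoly lam (l + 2) =
      C (2 * ((l : K) + 1 + lam)) * (X * gegenbauerPoly lam (l + 1))
        - C ((l : K) + 2 * lam) * gegenbauerPoly lam l := by
  have hl : (l : K) + 2 ≠ 0 := mod_cast (l + 1).succ_ne_zero
  rw [gegenbauerPoly, ← mul_assoc, ← C_mul, mul_inv_cancel₀ hl, C_1, one_mul]

/-- Each of the two identities is needed to prove the other for the next `l`. -/
lemma derivative_gegenbauerPoly_succ_and_X_mul_derivative (l : ℕ) :
    derivative (gegenbauerPoly lam (l + 1)) =
        X * derivative (gegenbauerPoly lam l) + C ((l : K) + 2 * lam) * gegenbauerPoly lam l ∧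
      X * derivative (gegenbauerPoly lam (l + 1)) =
        derivative (gegenbauerPoly lam l) + C ((l : K) + 1) * gegenbauerPoly lam (l + 1) := by
  induction l with
  | zero => simp [gegenbauerPoly, mul_comm]
  | succ l ih =>
    obtain ⟨hsucc, hX⟩ := ih
    have hrec := gegenbauerPoly_recurrence lam l
    have hrec' := congrArg derivative hrec
    have hl : C ((l : K) + 2) ≠ 0 := C_ne_zero.2 (mod_cast (l + 1).succ_ne_zero)
    simp only [derivative_sub, derivative_mul, derivative_C, derivative_X, zero_mul, zero_add,
      one_mul] at hrec'
    push_cast at *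
    simp only [map_add, map_mul, map_one, map_natCast, C_ofNat] at *
    have hsucc' : derivative (gegenbauerPoly lam (l + 2)) =
        X * derivative (gegenbauerPoly lam (l + 1))
          + ((l : K[X]) + 1 + 2 * C lam) * gegenbauerPoly lam (l + 1) := by
      apply mul_left_cancel₀ hl
      linear_combination hrec' + (l + 2 * C lam) * hX
    refine ⟨hsucc', ?_⟩
    linear_combination X * hsucc' + X * hX - hsucc - hrec

lemma gegenbauerPoly_ode (l : ℕ) :
    (1 - X ^ 2) * derivative (derivative (gegenbauerPoly lam l)) =
      C (2 * lam + 1) * (X * derivative (gegenbauerPoly lam l))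
        - C ((l : K) * (l + 2 * lam)) * gegenbauerPoly lam l := by
  cases l with
  | zero => simp [gegenbauerPoly]
  | succ l =>
    obtain ⟨hsucc, hX⟩ := derivative_gegenbauerPoly_succ_and_X_mul_derivative lam l
    have hsucc' := congrArg derivative hsucc
    have hX' := congrArg derivative hX
    simp only [derivative_add, derivative_mul, derivative_C, derivative_X, zero_mul, zero_add,
      one_mul] at hsucc' hX'
    push_cast
    simp only [map_add, map_mul, map_one, map_natCast, C_ofNat] at *
    linear_combination hsucc' - X * hX' - (l + 1 + 2 * C lam) * hX

variable {lam} in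
lemma one_sub_X_mul_scalingPoly (hlam : lam ≠ 0) (m : ℕ) :
    C (2 * lam) * ((1 - X) * scalingPoly lam m) =
      C ((m : K) + 2 * lam) * gegenbauerPoly lam m
        - C ((m : K) + 1) * gegenbauerPoly lam (m + 1) := by
  induction m with
  | zero =>
    have hzero : scalingPoly lam 0 = 1 := by simp [scalingPoly, gegenbauerPoly, hlam]
    simp only [hzero, gegenbauerPoly, Nat.cast_zero, zero_add, C_1]
    ring
  | succ m ih =>
    have hrec := gegenbauerPoly_recurrence lam m
    have hcoeff : C lam * C (((m : K) + 1 + lam) / lam) = m + 1 + C lam := by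
      rw [← C_mul, mul_div_cancel₀ _ hlam]
      simp
    rw [scalingPoly, sum_range_succ, ← scalingPoly]
    push_cast
    simp only [map_add, map_mul, map_one, map_natCast, C_ofNat] at *
    linear_combination ih + 2 * (1 - X) * gegenbauerPoly lam (m + 1) * hcoeff + hrec

end Identities

namespace IsGegenbauerFunctional

variable [CharZero K] {lam : K} {L : K[X] →ₗ[K] K}

lemma map_gegenbauerPoly_eq_zero (hL : IsGegenbauerFunctional lam L) {l : ℕ} (hl : l ≠ 0)
    (hlam : (l : K) + 2 * lam ≠ 0) : L (gegenbauerPoly lam l) = 0 := by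
  have h := hL (derivative (gegenbauerPoly lam l))
  rw [gegenbauerPoly_ode] at h
  simp only [map_sub, ← smul_eq_C_mul, map_smul, smul_eq_mul, sub_eq_self] at h
  simpa [hl, hlam] using h

lemma map_X_pow_mul_gegenbauerPoly_eq_zero (hL : IsGegenbauerFunctional lam L)
    (hlam : ∀ n : ℕ, n ≠ 0 → (n : K) + 2 * lam ≠ 0) {k l : ℕ} (hkl : k < l) :
    L (X ^ k * gegenbauerPoly lam l) = 0 := by
  induction k generalizing l with
  | zero => simpa using hL.map_gegenbauerPoly_eq_zero hkl.ne' (hlam l hkl.ne')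
  | succ k ih =>
    obtain ⟨l, rfl⟩ := Nat.exists_eq_add_one_of_ne_zero (Nat.ne_zero_of_lt hkl)
    have hrec := congrArg (fun p => L (X ^ k * p)) (gegenbauerPoly_recurrence lam l)
    simp only [mul_sub, ← smul_eq_C_mul, mul_smul_comm, map_sub, map_smul, smul_eq_mul,
      ← mul_assoc, ← pow_succ] at hrec
    rw [ih (show k < l + 2 by omega), ih (show k < l by omega)] at hrec
    have hne : 2 * ((l : K) + 1 + lam) ≠ 0 := by
      convert hlam (2 * (l + 1)) (by omega) using 1
      push_cast
      ring
    simpa [hne] using hrec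

lemma map_mul_gegenbauerPoly_eq_zero (hL : IsGegenbauerFunctional lam L)
    (hlam : ∀ n : ℕ, n ≠ 0 → (n : K) + 2 * lam ≠ 0) {q : K[X]} {l : ℕ}
    (hq : q.degree < (l : WithBot ℕ)) : L (q * gegenbauerPoly lam l) = 0 := by
  rw [q.as_sum_support_C_mul_X_pow, sum_mul, map_sum]
  refine sum_eq_zero fun k hk => ?_
  have hkl : k < l := WithBot.coe_lt_coe.1 ((le_degree_of_mem_supp k hk).trans_lt hq)
  rw [mul_assoc, ← smul_eq_C_mul, map_smul,
    hL.map_X_pow_mul_gegenbauerPoly_eq_zero hlam hkl, smul_zero]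

lemma map_mul_one_sub_X_mul_scalingPoly_eq_zero (hL : IsGegenbauerFunctional lam L)
    (hlam : ∀ n : ℕ, n ≠ 0 → (n : K) + 2 * lam ≠ 0) (hlam₀ : lam ≠ 0) {q : K[X]} {m : ℕ}
    (hq : q.degree < (m : WithBot ℕ)) : L (q * ((1 - X) * scalingPoly lam m)) = 0 := by
  have hq' : q.degree < ((m + 1 : ℕ) : WithBot ℕ) := hq.trans (mod_cast m.lt_succ_self)
  have h := congrArg (fun p => L (q * p)) (one_sub_X_mul_scalingPoly hlam₀ m)
  simp only [mul_sub, ← smul_eq_C_mul, mul_smul_comm, map_sub, map_smul,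
    hL.map_mul_gegenbauerPoly_eq_zero hlam hq, hL.map_mul_gegenbauerPoly_eq_zero hlam hq',
    smul_zero, sub_zero] at h
  simpa [mul_sub, hlam₀] using h

lemma map_scalingPoly (hL : IsGegenbauerFunctional lam L)
    (hlam : ∀ n : ℕ, n ≠ 0 → (n : K) + 2 * lam ≠ 0) (hlam₀ : lam ≠ 0) (m : ℕ) :
    L (scalingPoly lam m) = L 1 := by
  rw [scalingPoly, sum_range_succ', map_add, map_sum]
  have hzero (l : ℕ) : L (gegenbauerPoly lam (l + 1)) = 0 :=
    hL.map_gegenbauerPoly_eq_zero l.succ_ne_zero (hlam _ l.succ_ne_zero)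
  simp [← smul_eq_C_mul, hzero, gegenbauerPoly, hlam₀]

lemma scalingPoly_ne_zero (hL : IsGegenbauerFunctional lam L)
    (hlam : ∀ n : ℕ, n ≠ 0 → (n : K) + 2 * lam ≠ 0) (hlam₀ : lam ≠ 0) (hone : L 1 ≠ 0) (m : ℕ) :
    scalingPoly lam m ≠ 0 := fun hzero => hone <| by
  rw [← hL.map_scalingPoly hlam hlam₀ m, hzero, map_zero]

theorem map_scalingPoly_sq (hL : IsGegenbauerFunctional lam L)
    (hlam : ∀ n : ℕ, n ≠ 0 → (n : K) + 2 * lam ≠ 0) (hlam₀ : lam ≠ 0) (m : ℕ) :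
    2 * m * L (scalingPoly lam m ^ 2) =
      (2 * m + 2 * lam + 1) * L (X * scalingPoly lam m ^ 2) := by
  set p := scalingPoly lam m
  set q := (1 + X) * derivative p - C (m : K) * p
  have horth : L (q * ((1 - X) * p)) = 0 :=
    hL.map_mul_one_sub_X_mul_scalingPoly_eq_zero hlam hlam₀
      (degree_one_add_X_mul_derivative_sub_lt (natDegree_scalingPoly_le lam m))
  have hparts : L ((1 - X ^ 2) * derivative (p ^ 2)) = (2 * lam + 1) * L (X * p ^ 2) := hL _
  have hsplit : (1 - X ^ 2) * derivative (p ^ 2) =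
      C 2 * (q * ((1 - X) * p)) + C (2 * (m : K)) * (p ^ 2 - X * p ^ 2) := by
    simp only [q, derivative_sq, map_mul, C_ofNat]
    ring
  rw [hsplit] at hparts
  simp only [← smul_eq_C_mul, map_add, map_sub, map_smul, horth, smul_eq_mul] at hparts
  linear_combination hparts

end IsGegenbauerFunctional

end Algebra

section Integral

open MeasureTheory

lemma intervalIntegrable_one_sub_sq_rpow {a : ℝ} (ha : -1 < a) :
    IntervalIntegrable (fun t : ℝ => (1 - t ^ 2) ^ a) volume (-1) 1 := by
  have hright : IntervalIntegrable (fun t : ℝ => (1 - t ^ 2) ^ a) volume 0 1 := by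
    have hsub : IntervalIntegrable (fun t : ℝ => (1 - t) ^ a) volume 0 1 := by
      simpa using
        ((intervalIntegral.intervalIntegrable_rpow' (a := 0) (b := 1) ha).comp_sub_left 1).symm
    have hadd : ContinuousOn (fun t : ℝ => (1 + t) ^ a) (Set.uIcc 0 1) := by
      rw [Set.uIcc_of_le zero_le_one]
      refine ContinuousOn.rpow_const (by fun_prop) fun t ht => Or.inl ?_
      linarith [ht.1]
    refine (hsub.mul_continuousOn hadd).congr fun t ht => ?_
    rw [Set.uIoc_of_le zero_le_one] at ht
    rw [← mul_rpow (by linarith [ht.2]) (by linarith [ht.1])]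
    ring_nf
  have hleft : IntervalIntegrable (fun t : ℝ => (1 - t ^ 2) ^ a) volume (-1) 0 := by
    simpa using (hright.comp_sub_left 0).symm
  exact hleft.trans hright

lemma intervalIntegrable_eval_mul_one_sub_sq_rpow {a : ℝ} (ha : -1 < a) (p : ℝ[X]) :
    IntervalIntegrable (fun t : ℝ => p.eval t * (1 - t ^ 2) ^ a) volume (-1) 1 :=
  (intervalIntegrable_one_sub_sq_rpow ha).continuousOn_mul p.continuous.continuousOn

/-- Integration over `[-1, 1]` against the weight `(1 - t²)^a`, as a linear functional on
polynomials; `-1 < a` is what makes the weight integrable. -/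
noncomputable def weightedIntegral (a : ℝ) (ha : -1 < a) : ℝ[X] →ₗ[ℝ] ℝ where
  toFun p := ∫ t in (-1 : ℝ)..1, p.eval t * (1 - t ^ 2) ^ a
  map_add' p q := by
    rw [← intervalIntegral.integral_add (intervalIntegrable_eval_mul_one_sub_sq_rpow ha p)
      (intervalIntegrable_eval_mul_one_sub_sq_rpow ha q)]
    simp [add_mul]
  map_smul' c p := by simp [mul_assoc]

lemma weightedIntegral_apply {a : ℝ} (ha : -1 < a) (p : ℝ[X]) :
    weightedIntegral a ha p = ∫ t in (-1 : ℝ)..1, p.eval t * (1 - t ^ 2) ^ a := rfl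

lemma one_sub_sq_pos {t : ℝ} (ht : t ∈ Set.Ioo (-1) 1) : 0 < 1 - t ^ 2 := by
  nlinarith [ht.1, ht.2]

lemma hasDerivAt_eval_mul_one_sub_sq_rpow (a : ℝ) (p : ℝ[X]) {t : ℝ} (ht : t ∈ Set.Ioo (-1) 1) :
    HasDerivAt (fun t : ℝ => p.eval t * (1 - t ^ 2) ^ (a + 1))
      (((1 - X ^ 2) * derivative p - C (2 * (a + 1)) * (X * p)).eval t * (1 - t ^ 2) ^ a) t := by
  have hpos := one_sub_sq_pos ht
  have hsq : HasDerivAt (fun t : ℝ => 1 - t ^ 2) (-(2 * t)) t := by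
    simpa using (hasDerivAt_pow 2 t).const_sub 1
  refine ((p.hasDerivAt t).mul (hsq.rpow_const (p := a + 1) (Or.inl hpos.ne'))).congr_deriv ?_
  simp only [rpow_add_one hpos.ne', add_sub_cancel_right, eval_sub, eval_mul, eval_one, eval_pow,
    eval_X, eval_C]
  ring

lemma isGegenbauerFunctional_weightedIntegral {a : ℝ} (ha : -1 < a) :
    IsGegenbauerFunctional (a + 1 / 2) (weightedIntegral a ha) := by
  intro p
  have ha₀ : a + 1 ≠ 0 := by linarith
  have hcont : ContinuousOn (fun t : ℝ => p.eval t * (1 - t ^ 2) ^ (a + 1)) (Set.Icc (-1) 1) :=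
    p.continuous.continuousOn.mul
      (ContinuousOn.rpow_const (by fun_prop) fun _ _ => Or.inr (by linarith))
  have hparts :
      weightedIntegral a ha ((1 - X ^ 2) * derivative p - C (2 * (a + 1)) * (X * p)) = 0 := by
    rw [weightedIntegral_apply, intervalIntegral.integral_eq_sub_of_hasDerivAt_of_le (by norm_num)
      hcont (fun t ht => hasDerivAt_eval_mul_one_sub_sq_rpow a p ht)
      (intervalIntegrable_eval_mul_one_sub_sq_rpow ha _)]
    simp [zero_rpow ha₀]
  rw [map_sub, ← smul_eq_C_mul, map_smul, smul_eq_mul] at hparts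
  linear_combination hparts

lemma weightedIntegral_sq_pos {a : ℝ} (ha : -1 < a) {p : ℝ[X]} (hp : p ≠ 0) :
    0 < weightedIntegral a ha (p ^ 2) := by
  have hnonneg : ∀ t ∈ Set.Ioc (-1 : ℝ) 1, 0 ≤ (p ^ 2).eval t * (1 - t ^ 2) ^ a := fun t ht => by
    have : 0 ≤ 1 - t ^ 2 := by nlinarith [ht.1, ht.2]
    rw [eval_pow]
    positivity
  have hsupport : Set.Ioo (-1 : ℝ) 1 \ p.roots.toFinset ⊆
      Function.support (fun t : ℝ => (p ^ 2).eval t * (1 - t ^ 2) ^ a) ∩ Set.Ioc (-1) 1 := by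
    rintro t ⟨ht, hroot⟩
    have heval : p.eval t ≠ 0 := by simpa [hp] using hroot
    have hweight := rpow_pos_of_pos (one_sub_sq_pos ht) a
    exact ⟨by simp [heval, hweight.ne'], Set.Ioo_subset_Ioc_self ht⟩
  have hvolume : 0 < volume (Set.Ioo (-1 : ℝ) 1 \ p.roots.toFinset) := by
    rw [measure_sdiff_null (p.roots.toFinset.finite_toSet.measure_zero volume)]
    simp
  rw [weightedIntegral_apply, intervalIntegral.integral_pos_iff_support_of_nonneg_ae' ?_
    (intervalIntegrable_eval_mul_one_sub_sq_rpow ha _)]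
  · exact ⟨by norm_num, hvolume.trans_le (measure_mono hsupport)⟩
  · rw [Set.uIoc_of_le (by norm_num)]
    exact ae_restrict_of_forall_mem measurableSet_Ioc hnonneg

end Integral

lemma eval_gegenbauerPoly (lam t : ℝ) : ∀ l, (gegenbauerPoly lam l).eval t = gegenbauer lam l t
  | 0 => by simp [gegenbauerPoly, gegenbauer]
  | 1 => by simp [gegenbauerPoly, gegenbauer]
  | l + 2 => by
    simp only [gegenbauerPoly, gegenbauer, eval_mul, eval_sub, eval_C, eval_X,
      eval_gegenbauerPoly lam t (l + 1), eval_gegenbauerPoly lam t l]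
    ring

lemma eval_scalingPoly (lam : ℝ) (m : ℕ) (t : ℝ) :
    (scalingPoly lam m).eval t = PhiScaling lam m t := by
  simp [scalingPoly, PhiScaling, eval_finsetSum, eval_gegenbauerPoly]

theorem space_variance_PhiScaling_general (lam : ℝ) (hlam : -1 / 2 < lam) (hlam₀ : lam ≠ 0)
    (m : ℕ) (hm : 1 ≤ m) :
    ((∫ t in (-1 : ℝ)..1, (PhiScaling lam m t) ^ 2 * (1 - t ^ 2) ^ (lam - 1 / 2)) /
          (∫ t in (-1 : ℝ)..1,
            t * (PhiScaling lam m t) ^ 2 * (1 - t ^ 2) ^ (lam - 1 / 2))) ^ 2 - 1 =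
        ((2 * (m : ℝ) + 2 * lam + 1) / (2 * (m : ℝ))) ^ 2 - 1 ∧
      (∫ t in (-1 : ℝ)..1, (PhiScaling lam m t) ^ 2 * (1 - t ^ 2) ^ (lam - 1 / 2)) =
        ((2 * (m : ℝ) + 2 * lam + 1) / (2 * (m : ℝ))) *
          ∫ t in (-1 : ℝ)..1,
            t * (PhiScaling lam m t) ^ 2 * (1 - t ^ 2) ^ (lam - 1 / 2) := by
  have ha : -1 < lam - 1 / 2 := by linarith
  have hm₀ : (m : ℝ) ≠ 0 := mod_cast Nat.ne_zero_of_lt hm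
  have hshift (n : ℕ) (hn : n ≠ 0) : (n : ℝ) + 2 * lam ≠ 0 := by
    have : (1 : ℝ) ≤ n := mod_cast Nat.one_le_iff_ne_zero.2 hn
    linarith
  have hL : IsGegenbauerFunctional lam (weightedIntegral (lam - 1 / 2) ha) := by
    simpa using isGegenbauerFunctional_weightedIntegral ha
  have hsq := hL.map_scalingPoly_sq hshift hlam₀ m
  have hone : weightedIntegral (lam - 1 / 2) ha 1 ≠ 0 := by
    simpa using (weightedIntegral_sq_pos ha one_ne_zero).ne'
  have hpos := weightedIntegral_sq_pos ha (hL.scalingPoly_ne_zero hshift hlam₀ hone m)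
  simp only [weightedIntegral_apply, eval_mul, eval_pow, eval_X, eval_scalingPoly] at hsq hpos
  set I := ∫ t in (-1 : ℝ)..1, PhiScaling lam m t ^ 2 * (1 - t ^ 2) ^ (lam - 1 / 2)
  set J := ∫ t in (-1 : ℝ)..1, t * PhiScaling lam m t ^ 2 * (1 - t ^ 2) ^ (lam - 1 / 2)
  have hIJ : I = (2 * m + 2 * lam + 1) / (2 * m) * J := by
    field_simp
    linear_combination hsq
  have hJ : J ≠ 0 := fun hJ => hpos.ne' (by rw [hIJ, hJ, mul_zero])
  exact ⟨by rw [hIJ, mul_div_cancel_right₀ _ hJ], hIJ⟩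

/-- The space variance of the weighted scaling function `Φ_m`:
`var_S(Φ_m) = ((2m+2λ+1)/(2m))² − 1`, equivalently
`∫ Φ_m² w = ((2m+2λ+1)/(2m)) ∫ t Φ_m² w` with `w(t) = (1−t²)^{λ−1/2}`. -/
theorem space_variance_PhiScaling (lam : ℝ) (hlam : 0 < lam) (m : ℕ) (hm : 1 ≤ m) :
    ((∫ t in (-1 : ℝ)..1, (PhiScaling lam m t) ^ 2 * (1 - t ^ 2) ^ (lam - 1 / 2)) /
          (∫ t in (-1 : ℝ)..1,
            t * (PhiScaling lam m t) ^ 2 * (1 - t ^ 2) ^ (lam - 1 / 2))) ^ 2 - 1 =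
        ((2 * (m : ℝ) + 2 * lam + 1) / (2 * (m : ℝ))) ^ 2 - 1 ∧
      (∫ t in (-1 : ℝ)..1, (PhiScaling lam m t) ^ 2 * (1 - t ^ 2) ^ (lam - 1 / 2)) =
        ((2 * (m : ℝ) + 2 * lam + 1) / (2 * (m : ℝ))) *
          ∫ t in (-1 : ℝ)..1,
            t * (PhiScaling lam m t) ^ 2 * (1 - t ^ 2) ^ (lam - 1 / 2) :=
  space_variance_PhiScaling_general lam (by linarith) hlam.ne' m hm
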